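/- Let v ∈ ℝ^K be unimodal with peak p, and let ṽ satisfy ‖ṽ − v‖_∞ ≤ ε. Define w by w_k = max_{i ≤ k} ṽ_i for k ≤ p̃ and w_k = max_{i ≥ k} ṽ_i for k ≥ p̃, where p̃ = argmax_k ṽ_k. Then w is unimodal and ‖w − ṽ‖_∞ ≤ 2ε. -/

import Mathlib

/-- A vector `v` is unimodal with peak `p`. -/
def Unimodal {K : ℕ} (v : Fin K → ℝ) (p : Fin K) : Prop :=
  (∀ i j : Fin K, i ≤ j → j ≤ p → v i ≤ v j) ∧
  (∀ i j : Fin K, p ≤ i → i ≤ j → v j ≤ v i)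

/-- let `v` be unimodal with peak `p` and `vt` entrywise within
`ε` of `v`; let `pt` be a maximizer of `vt` and define
`w k = max_{i ≤ k} vt i` for `k ≤ pt` and `w k = max_{i ≥ k} vt i` for
`k > pt`. Then `w` is unimodal (with peak `pt`) and `‖w - vt‖_∞ ≤ 2ε`. -/
theorem rounding_unimodal {K : ℕ} (v vt : Fin K → ℝ) (p pt : Fin K) (ε : ℝ)
    (hv : Unimodal v p)
    (hdist : ∀ k, |vt k - v k| ≤ ε)
    (hpt : ∀ k, vt k ≤ vt pt)
    (w : Fin K → ℝ)
    (hw : ∀ k, w k = if k ≤ pt then (Finset.Iic k).sup' Finset.nonempty_Iic vt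
                     else (Finset.Ici k).sup' Finset.nonempty_Ici vt) :
    Unimodal w pt ∧ ∀ k, |w k - vt k| ≤ 2 * ε := by
  have eps : ∀ k, vt k ≤ v k + ε ∧ v k ≤ vt k + ε := fun k => by
    have := abs_le.mp (hdist k)
    constructor <;> linarith [this.1, this.2]
  have left : ∀ i k, i ≤ k → k ≤ pt → vt i ≤ vt k + 2 * ε := by
    intro i k hik hk
    rcases le_total k p with h | h
    · linarith [hv.1 i k hik h, (eps i).1, (eps k).2]
    · linarith [hv.2 k pt h hk, hpt i, (eps pt).1, (eps k).2]
  have right : ∀ i k, k ≤ i → pt ≤ k → vt i ≤ vt k + 2 * ε := by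
    intro i k hik hk
    rcases le_total p k with h | h
    · linarith [hv.2 k i h hik, (eps i).1, (eps k).2]
    · linarith [hv.1 pt k hk h, hpt i, (eps pt).1, (eps k).2]
  have wtop : ∀ k, w k ≤ vt pt := by
    intro k
    rw [hw]
    split_ifs
    · exact Finset.sup'_le _ _ fun i _ => hpt i
    · exact Finset.sup'_le _ _ fun i _ => hpt i
  have wge : ∀ k, vt k ≤ w k := by
    intro k
    rw [hw]
    split_ifs
    · exact Finset.le_sup' vt (Finset.mem_Iic.mpr le_rfl)
    · exact Finset.le_sup' vt (Finset.mem_Ici.mpr le_rfl)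
  refine ⟨⟨?_, ?_⟩, ?_⟩
  · intro i j hij hj
    rw [hw i, hw j, if_pos (hij.trans hj), if_pos hj]
    exact Finset.sup'_mono _ (Finset.Iic_subset_Iic.mpr hij) _
  · intro i j hi hij
    rcases hi.eq_or_lt with h | h
    · subst h
      exact (wtop j).trans (wge _)
    · rw [hw i, hw j, if_neg (not_le.mpr h), if_neg (not_le.mpr (h.trans_le hij))]
      exact Finset.sup'_mono _ (Finset.Ici_subset_Ici.mpr hij) _
  · intro k
    have hup : w k ≤ vt k + 2 * ε := by
      rw [hw]
      split_ifs with h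
      · exact Finset.sup'_le _ _ fun i hi => left i k (Finset.mem_Iic.mp hi) h
      · exact Finset.sup'_le _ _ fun i hi =>
          right i k (Finset.mem_Ici.mp hi) (not_le.mp h).le
    rw [abs_of_nonneg (sub_nonneg.mpr (wge k))]
    linarith
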